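/- Let n ≥ 1 and let γⁿ be the standard Gaussian probability measure on ℝⁿ. For every λ ∈ ℕ (λ ≥ 0), the number of indices k ≥ 1 with λ_k^Lip(ℝⁿ,|·|,γⁿ) ≤ λ equals the binomial coefficient C(n+λ, λ). In other words, the eigenvalues of the Gaussian space, counted with multiplicity in non-decreasing order, are the non-negative integers, where each integer l ∈ ℕ occurs with multiplicity C(n−1+l, l). -/

import Mathlib

open MeasureTheory Filter Topology ENNReal

/-- The local Lipschitz constant `|∇f|(x) = limsup_{y→x} |f(y)-f(x)|/d(y,x)`
(equal to `0` at isolated points, by the convention `Real.sInf ∅ = 0`). -/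
noncomputable def localLip {Ω : Type*} [PseudoMetricSpace Ω] (f : Ω → ℝ) (x : Ω) : ℝ :=
  Filter.limsup (fun y => |f y - f x| / dist y x) (nhdsWithin x {x}ᶜ)

/-- Membership in the metric Sobolev space `W^{1,2}_Lip(Ω,d,μ)`. -/
def memW12Lip {Ω : Type*} [PseudoMetricSpace Ω] [MeasurableSpace Ω]
    (μ : Measure Ω) (f : Ω → ℝ) : Prop :=
  LocallyLipschitz f ∧
    (∫⁻ x, ENNReal.ofReal ((f x) ^ 2) ∂μ) + (∫⁻ x, ENNReal.ofReal ((localLip f x) ^ 2) ∂μ) < ⊤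

/-- The `k`-th metric eigenvalue `λ_k^Lip(Ω,d,μ)`: the infimum over `k`-dimensional
linear subspaces `F ⊆ W^{1,2}_Lip` of the supremum of the Rayleigh quotient over `F`. -/
noncomputable def lambdaLip {Ω : Type*} [PseudoMetricSpace Ω] [MeasurableSpace Ω]
    (μ : Measure Ω) (k : ℕ) : ℝ :=
  sInf { a : ℝ | ∃ F : Submodule ℝ (Ω → ℝ), Module.finrank ℝ F = k ∧
    (∀ f ∈ F, memW12Lip μ f) ∧
    a = sSup { r : ℝ | ∃ f ∈ F, (∫ x, (f x) ^ 2 ∂μ) ≠ 0 ∧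
      r = (∫ x, (localLip f x) ^ 2 ∂μ) / (∫ x, (f x) ^ 2 ∂μ) } }

/-- The standard Gaussian probability measure `γⁿ` on `ℝⁿ`, with density proportional
to `exp(-|x|²/2)` with respect to Lebesgue measure, normalized to total mass one. -/
noncomputable def stdGaussian (n : ℕ) : Measure (EuclideanSpace ℝ (Fin n)) :=
  ((volume.withDensity fun x : EuclideanSpace ℝ (Fin n) =>
      ENNReal.ofReal (Real.exp (-‖x‖ ^ 2 / 2))) Set.univ)⁻¹ •
    volume.withDensity fun x : EuclideanSpace ℝ (Fin n) =>
      ENNReal.ofReal (Real.exp (-‖x‖ ^ 2 / 2))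



section AbstractHilbert

variable {H V : Type*} [NormedAddCommGroup H] [InnerProductSpace ℝ H] [AddCommGroup V] [Module ℝ V]

/-- Existence of orthogonal projection on `J (Q)` -/
lemma absH_proj (J : V →ₗ[ℝ] H) (Q : Submodule ℝ V) [FiniteDimensional ℝ Q] (u : H) :
    ∃ q ∈ Q, (∀ r ∈ Q, inner ℝ (J r) u = inner ℝ (J r) (J q)) ∧
      (∀ r ∈ Q, ‖u - J q‖ ≤ ‖u - J r‖) := by
  set K := Q.map J
  haveI : FiniteDimensional ℝ K := inferInstance
  have hm : K.starProjection u ∈ K := Submodule.starProjection_apply_mem K u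
  obtain ⟨q, hq, hqe⟩ := hm
  have h1 : ∀ r ∈ Q, inner ℝ (J r) u = inner ℝ (J r) (J q) := by
    intro r hr
    have := Submodule.starProjection_inner_eq_zero (K := K) u (J r) ⟨r, hr, rfl⟩
    rw [← hqe, inner_sub_left, sub_eq_zero] at this
    rw [real_inner_comm, this, real_inner_comm]
  refine ⟨q, hq, h1, ?_⟩
  intro r hr
  have h2 : inner ℝ (J q - J r) (u - J q) = 0 := by
    rw [← map_sub, inner_sub_right, h1 _ (Q.sub_mem hq hr), sub_self]
  have h3 : ‖u - J r‖ ^ 2 = ‖u - J q‖ ^ 2 + ‖J q - J r‖ ^ 2 := by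
    have : u - J r = (u - J q) + (J q - J r) := by abel
    rw [this, norm_add_sq_real, real_inner_comm, h2]; ring
  exact le_of_sq_le_sq (by nlinarith [sq_nonneg ‖J q - J r‖]) (norm_nonneg _)

variable (J : V →ₗ[ℝ] H) (D : V →ₗ[ℝ] V) (Q : ℕ → Submodule ℝ V)

lemma absH_D_mem (hmono : ∀ N, Q N ≤ Q (N + 1))
    (hD : ∀ N, ∀ p ∈ Q (N + 1), D p - (N : ℝ) • p ∈ Q N) (h0 : Q 0 = ⊥)
    (N : ℕ) : ∀ p ∈ Q N, D p ∈ Q N := by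
  intro p hp
  cases N with
  | zero => rw [h0, Submodule.mem_bot] at hp ⊢; simp [hp]
  | succ N =>
    have := (Q (N+1)).add_mem (hmono N (hD N p hp)) ((Q (N+1)).smul_mem (N : ℝ) hp)
    simpa using this

/-- decomposition -/
lemma absH_decomp (h0 : Q 0 = ⊥) (hmono : ∀ N, Q N ≤ Q (N + 1))
    [∀ N, FiniteDimensional ℝ (Q N)]
    (hD : ∀ N, ∀ p ∈ Q (N + 1), D p - (N : ℝ) • p ∈ Q N)
    (hsym : ∀ p q, inner ℝ (J (D p)) (J q) = inner ℝ (J p) (J (D q)))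
    (N : ℕ) (p : V) (hp : p ∈ Q (N + 1)) :
    ∃ r ∈ Q N, (∀ s ∈ Q N, inner ℝ (J s) (J (p - r)) = 0) ∧
      inner ℝ (J (D p)) (J p) = N * ‖J (p - r)‖ ^ 2 + inner ℝ (J (D r)) (J r) ∧
      ‖J p‖ ^ 2 = ‖J (p - r)‖ ^ 2 + ‖J r‖ ^ 2 := by
  obtain ⟨r, hr, h1, -⟩ := absH_proj J (Q N) (J p)
  have hw : ∀ s ∈ Q N, inner ℝ (J s) (J (p - r)) = 0 := by
    intro s hs
    rw [map_sub, inner_sub_right, h1 s hs, sub_self]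
  refine ⟨r, hr, hw, ?_, ?_⟩
  · set w := p - r with hwdef
    have hpe : p = w + r := by simp [w]
    have hwm : w ∈ Q (N + 1) := (Q (N+1)).sub_mem hp (hmono N hr)
    have e1 : inner ℝ (J (D w)) (J w) = N * ‖J w‖ ^ 2 := by
      have := hw _ (hD N w hwm)
      rw [map_sub, map_smul, inner_sub_left, inner_smul_left, real_inner_self_eq_norm_sq] at this
      simpa [sub_eq_zero] using this
    have hDr := absH_D_mem D Q hmono hD h0 N r hr
    have e2 : inner ℝ (J (D r)) (J w) = 0 := hw _ hDr
    have e3 : inner ℝ (J (D w)) (J r) = 0 := by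
      rw [hsym, real_inner_comm]; exact e2
    rw [hpe]
    simp only [map_add, inner_add_left, inner_add_right, e1, e2, e3]; ring
  · have : J p = J (p - r) + J r := by simp
    rw [this, norm_add_sq_real, real_inner_comm, hw r hr]; ring

lemma absH_upper (h0 : Q 0 = ⊥) (hmono : ∀ N, Q N ≤ Q (N + 1))
    [∀ N, FiniteDimensional ℝ (Q N)]
    (hD : ∀ N, ∀ p ∈ Q (N + 1), D p - (N : ℝ) • p ∈ Q N)
    (hsym : ∀ p q, inner ℝ (J (D p)) (J q) = inner ℝ (J p) (J (D q)))
    (N : ℕ) : ∀ p ∈ Q (N + 1), inner ℝ (J (D p)) (J p) ≤ N * ‖J p‖ ^ 2 := by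
  induction N with
  | zero =>
    intro p hp
    obtain ⟨r, hr, hw, h1, h2⟩ := absH_decomp J D Q h0 hmono hD hsym 0 p hp
    have : r = 0 := by simpa [h0] using hr
    subst this
    rw [h1]; simp
  | succ N ih =>
    intro p hp
    obtain ⟨r, hr, hw, h1, h2⟩ := absH_decomp J D Q h0 hmono hD hsym (N+1) p hp
    rw [h1, h2]
    have := ih r hr
    push_cast
    nlinarith [sq_nonneg ‖J r‖]

lemma absH_lower (h0 : Q 0 = ⊥) (hmono : ∀ N, Q N ≤ Q (N + 1))
    [∀ N, FiniteDimensional ℝ (Q N)]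
    (hD : ∀ N, ∀ p ∈ Q (N + 1), D p - (N : ℝ) • p ∈ Q N)
    (hsym : ∀ p q, inner ℝ (J (D p)) (J q) = inner ℝ (J p) (J (D q)))
    (l : ℕ) (m : ℕ) : ∀ p ∈ Q (l + m), (∀ s ∈ Q l, inner ℝ (J s) (J p) = 0) →
      l * ‖J p‖ ^ 2 ≤ inner ℝ (J (D p)) (J p) := by
  induction m with
  | zero =>
    intro p hp ho
    have h1 : J p = 0 := by simpa using ho p hp
    simp [h1]
  | succ m ih =>
    intro p hp ho
    obtain ⟨r, hr, hw, h1, h2⟩ := absH_decomp J D Q h0 hmono hD hsym (l+m) p hp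
    rw [h1, h2]
    have hle : Q l ≤ Q (l + m) := monotone_nat_of_le_succ hmono (Nat.le_add_right _ _)
    have := ih r hr (by
      intro s hs
      have e := hw s (hle hs)
      rw [map_sub, inner_sub_right, ho s hs] at e
      linarith)
    push_cast
    nlinarith [sq_nonneg ‖J (p - r)‖, mul_nonneg (Nat.cast_nonneg (α := ℝ) m) (sq_nonneg ‖J (p - r)‖)]

lemma absH_main (h0 : Q 0 = ⊥) (hmono : ∀ N, Q N ≤ Q (N + 1))
    [∀ N, FiniteDimensional ℝ (Q N)] (htop : ∀ p, ∃ N, p ∈ Q N)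
    (hD : ∀ N, ∀ p ∈ Q (N + 1), D p - (N : ℝ) • p ∈ Q N)
    (hsym : ∀ p q, inner ℝ (J (D p)) (J q) = inner ℝ (J p) (J (D q)))
    (hdense : DenseRange J) (l : ℕ) (u : H) (e : ℝ) (he0 : 0 ≤ e)
    (ho : ∀ s ∈ Q l, inner ℝ (J s) u = 0)
    (he : ∀ p, inner ℝ (J (D p)) u ^ 2 ≤ inner ℝ (J (D p)) (J p) * e) :
    l * ‖u‖ ^ 2 ≤ e := by
  have key : ∀ ε > 0, ∃ q, ‖u - J q‖ < ε ∧ l * ‖J q‖ ^ 2 ≤ e := by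
    intro ε hε
    obtain ⟨p, hp⟩ := hdense.exists_dist_lt u hε
    obtain ⟨N, hN⟩ := htop p
    have hm := monotone_nat_of_le_succ hmono
    have hp' : p ∈ Q (l + N) := hm (Nat.le_add_left _ _) hN
    obtain ⟨q, hq, h1, h2⟩ := absH_proj J (Q (l + N)) u
    refine ⟨q, (h2 p hp').trans_lt (by rwa [← dist_eq_norm]), ?_⟩
    have h3 := absH_lower J D Q h0 hmono hD hsym l N q hq (by
      intro s hs
      rw [← h1 s (hm (Nat.le_add_right _ _) hs), ho s hs])
    refine h3.trans ?_
    have h4 := he q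
    rw [h1 _ (absH_D_mem D Q hmono hD h0 _ q hq)] at h4
    by_contra hc
    push Not at hc
    nlinarith
  have hc : u ∈ closure {v : H | l * ‖v‖ ^ 2 ≤ e} := by
    rw [Metric.mem_closure_iff]
    intro ε hε
    obtain ⟨q, hq, hq2⟩ := key ε hε
    exact ⟨J q, hq2, by rwa [dist_eq_norm]⟩
  have : IsClosed {v : H | l * ‖v‖ ^ 2 ≤ e} := isClosed_le (by fun_prop) (by fun_prop)
  rwa [this.closure_eq] at hc

end AbstractHilbert


section PolyAlg

/-- polynomials of degree `< N` -/
noncomputable def gQ (n N : ℕ) : Submodule ℝ (MvPolynomial (Fin n) ℝ) :=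
  MvPolynomial.restrictSupport ℝ {s : Fin n →₀ ℕ | s.degree < N}

/-- (minus) the Ornstein--Uhlenbeck operator on polynomials -/
noncomputable def gD (n : ℕ) : MvPolynomial (Fin n) ℝ →ₗ[ℝ] MvPolynomial (Fin n) ℝ :=
  ∑ i, ((LinearMap.mulLeft ℝ (MvPolynomial.X i)).comp (MvPolynomial.pderiv i).toLinearMap
    - (MvPolynomial.pderiv i).toLinearMap.comp (MvPolynomial.pderiv i).toLinearMap)

lemma gD_apply (n : ℕ) (p : MvPolynomial (Fin n) ℝ) :
    gD n p = ∑ i, (MvPolynomial.X i * MvPolynomial.pderiv i p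
      - MvPolynomial.pderiv i (MvPolynomial.pderiv i p)) := by
  simp [gD]

lemma gSet_eq (n N : ℕ) : {s : Fin n →₀ ℕ | s.degree < N} =
    ((Finset.range N).biUnion fun d => (Finset.univ : Finset (Fin n)).finsuppAntidiag d :
      Finset (Fin n →₀ ℕ)) := by
  ext s
  simp [Finset.mem_finsuppAntidiag, Finsupp.degree_eq_sum]

lemma gSet_card (n : ℕ) (hn : 1 ≤ n) (l : ℕ) :
    ((Finset.range (l + 1)).biUnion fun d => (Finset.univ : Finset (Fin n)).finsuppAntidiag d :
      Finset (Fin n →₀ ℕ)).card = (n + l).choose l := by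
  rw [Finset.card_biUnion]
  · simp only [Finset.card_finsuppAntidiag_nat_eq_choose, Finset.card_univ, Fintype.card_fin]
    induction l with
    | zero => simp
    | succ l ih =>
      rw [Finset.sum_range_succ, ih, ← add_assoc, Nat.add_sub_cancel, Nat.choose_succ_succ]
  · intro a _ b _ hab
    rw [Function.onFun, Finset.disjoint_left]
    intro s hs hs'
    rw [Finset.mem_finsuppAntidiag] at hs hs'
    exact hab (hs.1.symm.trans hs'.1)

instance gQ_fin (n N : ℕ) : FiniteDimensional ℝ (gQ n N) := by
  have : Finite {s : Fin n →₀ ℕ | s.degree < N} := by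
    rw [gSet_eq]; exact Finset.finite_toSet _
  exact Module.Finite.of_basis (MvPolynomial.basisRestrictSupport ℝ _)

lemma gQ_finrank (n : ℕ) (hn : 1 ≤ n) (l : ℕ) :
    Module.finrank ℝ (gQ n (l + 1)) = (n + l).choose l := by
  rw [gQ, Module.finrank_eq_nat_card_basis (MvPolynomial.basisRestrictSupport ℝ _),
    Nat.card_coe_set_eq, gSet_eq, Set.ncard_coe_finset, gSet_card n hn l]

lemma gQ_zero (n : ℕ) : gQ n 0 = ⊥ := by
  simp [gQ, MvPolynomial.restrictSupport_eq_span]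

lemma gQ_mono (n N : ℕ) : gQ n N ≤ gQ n (N + 1) :=
  MvPolynomial.restrictSupport_mono ℝ (fun s hs => by
    simp only [Set.mem_setOf_eq] at hs ⊢; omega)

lemma gQ_top (n : ℕ) (p : MvPolynomial (Fin n) ℝ) : ∃ N, p ∈ gQ n N := by
  refine ⟨p.support.sup Finsupp.degree + 1, ?_⟩
  rw [gQ, MvPolynomial.mem_restrictSupport_iff]
  intro s hs
  exact Nat.lt_succ_of_le (Finset.le_sup (f := Finsupp.degree) hs)

lemma gD_sub (n N : ℕ) : ∀ p ∈ gQ n (N + 1), gD n p - (N : ℝ) • p ∈ gQ n N := by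
  intro p hp
  rw [gQ, MvPolynomial.restrictSupport_eq_span] at hp
  induction hp using Submodule.span_induction with
  | zero => simp
  | add x y _ _ hx hy =>
    have := (gQ n N).add_mem hx hy
    convert this using 1
    rw [map_add, smul_add]; abel
  | smul a x _ hx =>
    have := (gQ n N).smul_mem a hx
    convert this using 1
    rw [map_smul, smul_sub, smul_comm]
  | mem x hx =>
    obtain ⟨s, hs, rfl⟩ := hx
    simp only [Set.mem_setOf_eq] at hs
    have e : gD n (MvPolynomial.monomial s 1) - (N : ℝ) • MvPolynomial.monomial s (1 : ℝ) =
        ((s.degree : ℝ) - N) • MvPolynomial.monomial s (1 : ℝ) -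
        ∑ i, MvPolynomial.pderiv i (MvPolynomial.pderiv i (MvPolynomial.monomial s (1 : ℝ))) := by
      rw [gD_apply, Finset.sum_sub_distrib]
      simp only [MvPolynomial.X_mul_pderiv_monomial]
      rw [← Finset.sum_smul, ← Finsupp.degree_eq_sum, sub_smul, ← Nat.cast_smul_eq_nsmul ℝ]
      abel
    rw [e]
    refine (gQ n N).sub_mem ?_ ((gQ n N).sum_mem ?_)
    · rcases Nat.lt_succ_iff_lt_or_eq.mp hs with h | h
      · refine (gQ n N).smul_mem _ ?_
        simp [gQ, h]
      · simp [h]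
    · intro i _
      rw [MvPolynomial.pderiv_monomial, MvPolynomial.pderiv_monomial, gQ,
        MvPolynomial.monomial_mem_restrictSupport]
      by_cases h : s i = 0
      · right; simp [h]
      left
      have h1 : (s - Finsupp.single i 1 - Finsupp.single i 1).degree ≤ (s - Finsupp.single i 1).degree :=
        Finsupp.degree_mono tsub_le_self
      have h2 : (s - Finsupp.single i 1).degree + 1 = s.degree := by
        have : s - Finsupp.single i 1 + Finsupp.single i 1 = s := by
          apply tsub_add_cancel_of_le
          rw [Finsupp.single_le_iff]; omega
        conv_rhs => rw [← this]
        simp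
      simp only [Set.mem_setOf_eq]
      omega

end PolyAlg


section GMeasure

/-- abbreviation -/
abbrev gE (n : ℕ) := EuclideanSpace ℝ (Fin n)

lemma gw_integrable (n : ℕ) (a : ℝ) :
    Integrable (fun x : gE n => Real.exp (a * ‖x‖) * Real.exp (-‖x‖ ^ 2 / 2)) := by
  have h := GaussianFourier.integrable_cexp_neg_mul_sq_norm_add (V := gE n) (b := 1/4)
    (by norm_num) 0 0
  have h2 : Integrable (fun x : gE n => Real.exp (a ^ 2) * Real.exp (-‖x‖ ^ 2 / 4)) := by
    refine (h.norm.congr ?_).const_mul _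
    filter_upwards with x
    rw [Complex.norm_exp]
    congr 1
    simp only [zero_mul, add_zero]
    norm_cast
    rw [show (-(1 / 4) * ((‖x‖ ^ 2 : ℝ) : ℂ)) = ((-‖x‖ ^ 2 / 4 : ℝ) : ℂ) by push_cast; ring]
    exact Complex.ofReal_re _
  refine h2.mono (by fun_prop) ?_
  filter_upwards with x
  rw [← Real.exp_add, ← Real.exp_add, Real.norm_eq_abs, Real.norm_eq_abs, Real.abs_exp,
    Real.abs_exp, Real.exp_le_exp]
  nlinarith [sq_nonneg (a - ‖x‖ / 2)]

/-- unnormalized -/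
noncomputable def gZ (n : ℕ) : ENNReal := (volume.withDensity fun x : gE n =>
      ENNReal.ofReal (Real.exp (-‖x‖ ^ 2 / 2))) Set.univ

lemma gZ_ne_top (n : ℕ) : gZ n ≠ ⊤ := by
  rw [gZ, withDensity_apply _ MeasurableSet.univ, Measure.restrict_univ]
  have h := gw_integrable n 0
  simp only [zero_mul, Real.exp_zero, one_mul] at h
  exact ((hasFiniteIntegral_iff_ofReal (ae_of_all _ fun x => (Real.exp_pos _).le)).1 h.2).ne

lemma gW_abs (n : ℕ) : (volume : Measure (gE n)) ≪ volume.withDensity fun x : gE n =>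
      ENNReal.ofReal (Real.exp (-‖x‖ ^ 2 / 2)) := by
  apply withDensity_absolutelyContinuous'
  · fun_prop
  · filter_upwards with x
    simp [Real.exp_pos]

lemma gZ_ne_zero (n : ℕ) : gZ n ≠ 0 := by
  intro h
  have := gW_abs n h
  exact isOpen_univ.measure_ne_zero volume Set.univ_nonempty this

lemma stdG_def (n : ℕ) : stdGaussian n = (gZ n)⁻¹ • volume.withDensity fun x : gE n =>
      ENNReal.ofReal (Real.exp (-‖x‖ ^ 2 / 2)) := rfl

instance stdG_prob (n : ℕ) : IsProbabilityMeasure (stdGaussian n) := by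
  constructor
  rw [stdG_def, Measure.smul_apply, smul_eq_mul]
  exact ENNReal.inv_mul_cancel (gZ_ne_zero n) (gZ_ne_top n)

lemma stdG_abs (n : ℕ) : stdGaussian n ≪ volume :=
  (withDensity_absolutelyContinuous _ _).smul_left _

lemma vol_abs (n : ℕ) : volume ≪ stdGaussian n :=
  (gW_abs n).trans (Measure.absolutelyContinuous_smul (ENNReal.inv_ne_zero.2 (gZ_ne_top n)))

lemma stdG_integral (n : ℕ) (f : gE n → ℝ) :
    ∫ x, f x ∂(stdGaussian n) = (gZ n)⁻¹.toReal * ∫ x, f x * Real.exp (-‖x‖ ^ 2 / 2) := by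
  rw [stdG_def, integral_smul_measure, smul_eq_mul]
  congr 1
  rw [integral_withDensity_eq_integral_toReal_smul (by fun_prop) (by simp)]
  congr 1; ext x
  rw [ENNReal.toReal_ofReal (Real.exp_pos _).le, smul_eq_mul, mul_comm]

lemma stdG_integrable (n : ℕ) (f : gE n → ℝ) :
    Integrable f (stdGaussian n) ↔ Integrable (fun x => f x * Real.exp (-‖x‖ ^ 2 / 2)) := by
  rw [stdG_def, integrable_smul_measure (by simp [gZ_ne_top]) (by simp [gZ_ne_zero]),
    integrable_withDensity_iff_integrable_smul' (by fun_prop) (by simp)]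
  have : (fun x : gE n => (ENNReal.ofReal (Real.exp (-‖x‖ ^ 2 / 2))).toReal • f x) =
      (fun x => f x * Real.exp (-‖x‖ ^ 2 / 2)) := by
    ext x
    rw [ENNReal.toReal_ofReal (Real.exp_pos _).le, smul_eq_mul, mul_comm]
  rw [this]

lemma stdG_exp (n : ℕ) (a : ℝ) : Integrable (fun x => Real.exp (a * ‖x‖)) (stdGaussian n) :=
  (stdG_integrable n _).2 (gw_integrable n a)

instance stdG_open (n : ℕ) : (stdGaussian n).IsOpenPosMeasure :=
  (vol_abs n).isOpenPosMeasure

lemma stdG_exp_memLp (n : ℕ) (a : ℝ) : MemLp (fun x => Real.exp (a * ‖x‖)) 2 (stdGaussian n) := by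
  rw [memLp_two_iff_integrable_sq (by fun_prop)]
  convert stdG_exp n (2 * a) using 2 with x
  rw [← Real.exp_nat_mul]; congr 1; push_cast; ring

end GMeasure

section PolyFun

/-- polynomial function -/
noncomputable def pf {n : ℕ} (p : MvPolynomial (Fin n) ℝ) (x : gE n) : ℝ :=
  MvPolynomial.eval (fun i => x i) p

variable {n : ℕ}

lemma pf_add (p q : MvPolynomial (Fin n) ℝ) (x) : pf (p + q) x = pf p x + pf q x := by simp [pf]
lemma pf_sub (p q : MvPolynomial (Fin n) ℝ) (x) : pf (p - q) x = pf p x - pf q x := by simp [pf]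
lemma pf_mul (p q : MvPolynomial (Fin n) ℝ) (x) : pf (p * q) x = pf p x * pf q x := by simp [pf]
lemma pf_smul (c : ℝ) (q : MvPolynomial (Fin n) ℝ) (x) : pf (c • q) x = c * pf q x := by
  simp [pf, MvPolynomial.smul_eval]
lemma pf_X (i : Fin n) (x) : pf (MvPolynomial.X i) x = x i := by simp [pf]
lemma pf_sum {ι : Type*} (s : Finset ι) (f : ι → MvPolynomial (Fin n) ℝ) (x) :
    pf (∑ i ∈ s, f i) x = ∑ i ∈ s, pf (f i) x := by simp [pf]

lemma pf_bound (p : MvPolynomial (Fin n) ℝ) :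
    ∃ C a : ℝ, ∀ x, |pf p x| ≤ C * Real.exp (a * ‖x‖) := by
  suffices ∃ C a : ℝ, 0 ≤ C ∧ 0 ≤ a ∧ ∀ x, |pf p x| ≤ C * Real.exp (a * ‖x‖) by
    obtain ⟨C, a, _, _, h⟩ := this; exact ⟨C, a, h⟩
  induction p using MvPolynomial.induction_on with
  | C r => exact ⟨|r|, 0, abs_nonneg _, le_rfl, fun x => by simp [pf]⟩
  | add p q hp hq =>
    obtain ⟨C, a, hC, ha, h⟩ := hp
    obtain ⟨C', a', hC', ha', h'⟩ := hq
    refine ⟨C + C', a + a', by positivity, by positivity, fun x => ?_⟩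
    rw [pf_add, add_mul]
    refine (abs_add_le _ _).trans (add_le_add ((h x).trans ?_) ((h' x).trans ?_))
    · gcongr; linarith
    · gcongr; linarith
  | mul_X p i hp =>
    obtain ⟨C, a, hC, ha, h⟩ := hp
    refine ⟨C, a + 1, by positivity, by positivity, fun x => ?_⟩
    rw [pf_mul, pf_X, abs_mul, add_mul, Real.exp_add, ← mul_assoc]
    have h1 : |x i| ≤ ‖x‖ := PiLp.norm_apply_le x i
    have h2 : ‖x‖ ≤ Real.exp (1 * ‖x‖) := by
      rw [one_mul]; linarith [Real.add_one_le_exp ‖x‖]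
    exact mul_le_mul (h x) (h1.trans h2) (abs_nonneg _) (by positivity)

lemma pf_hasFDerivAt (p : MvPolynomial (Fin n) ℝ) (x : gE n) :
    HasFDerivAt (pf p) (∑ i, pf (MvPolynomial.pderiv i p) x •
      (EuclideanSpace.proj i : gE n →L[ℝ] ℝ)) x := by
  induction p using MvPolynomial.induction_on with
  | C r =>
    have : pf (n := n) (MvPolynomial.C r) = fun _ => r := by ext x; simp [pf]
    rw [this]
    simpa [pf] using hasFDerivAt_const r x
  | add p q hp hq =>
    have := hp.add hq
    have e : pf (p + q) = pf p + pf q := by ext x; simp [pf_add]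
    rw [e]
    refine this.congr_fderiv ?_
    simp only [map_add, pf_add, add_smul, Finset.sum_add_distrib]
  | mul_X p i hp =>
    have h2 : HasFDerivAt (fun x : gE n => x i) (EuclideanSpace.proj i : gE n →L[ℝ] ℝ) x :=
      (EuclideanSpace.proj i : gE n →L[ℝ] ℝ).hasFDerivAt
    have := hp.mul h2
    have e : pf (p * MvPolynomial.X i) = pf p * (fun x : gE n => x i) := by
      ext x; simp [pf_mul, pf_X]
    rw [e]
    refine this.congr_fderiv (Eq.symm ?_)
    simp only [MvPolynomial.pderiv_mul, pf_add, pf_mul, pf_X, add_smul, Finset.sum_add_distrib]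
    rw [Finset.smul_sum, add_comm]
    congr 1
    · rw [Finset.sum_eq_single i]
      · simp [pf]
      · intro j _ hj
        rw [MvPolynomial.pderiv_X_of_ne hj.symm]; simp [pf]
      · simp
    · refine Finset.sum_congr rfl fun j _ => ?_
      rw [smul_smul, mul_comm]

lemma pf_fderiv (p : MvPolynomial (Fin n) ℝ) (x : gE n) (i : Fin n) :
    fderiv ℝ (pf p) x (EuclideanSpace.single i 1) = pf (MvPolynomial.pderiv i p) x := by
  rw [(pf_hasFDerivAt p x).fderiv]
  simp

lemma pf_contDiff (p : MvPolynomial (Fin n) ℝ) : ContDiff ℝ ⊤ (pf p) := by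
  induction p using MvPolynomial.induction_on with
  | C r =>
    have : pf (n := n) (MvPolynomial.C r) = fun _ => r := by ext x; simp [pf]
    rw [this]; exact contDiff_const
  | add p q hp hq =>
    have e : pf (p + q) = fun x => pf p x + pf q x := by ext x; simp [pf_add]
    rw [e]; exact hp.add hq
  | mul_X p i hp =>
    have e : pf (p * MvPolynomial.X i) = fun x => pf p x * x i := by
      ext x; simp [pf_mul, pf_X]
    rw [e]; exact hp.mul (by fun_prop)

lemma pf_cont (p : MvPolynomial (Fin n) ℝ) : Continuous (pf p) := (pf_contDiff p).continuous

lemma pf_memLp (p : MvPolynomial (Fin n) ℝ) : MemLp (pf p) 2 (stdGaussian n) := by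
  obtain ⟨C, a, h⟩ := pf_bound p
  refine ((stdG_exp_memLp n a).const_mul C).mono' (pf_cont p).aestronglyMeasurable ?_
  exact ae_of_all _ h

lemma norm_dual_sq (L : gE n →L[ℝ] ℝ) : ‖L‖ ^ 2 = ∑ i, (L (EuclideanSpace.single i 1)) ^ 2 := by
  obtain ⟨v, rfl⟩ := (InnerProductSpace.toDual ℝ (gE n)).surjective L
  rw [LinearIsometryEquiv.norm_map, EuclideanSpace.norm_sq_eq]
  simp [EuclideanSpace.inner_single_right]

end PolyFun


section LocLip
variable {n : ℕ}

lemma localLip_eq [NeZero n] {f : gE n → ℝ} {L : gE n →L[ℝ] ℝ} {x : gE n}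
    (hf : HasFDerivAt f L x) : localLip f x = ‖L‖ := by
  have hup : ∀ ε > 0, ∀ᶠ y in 𝓝[≠] x, |f y - f x| / dist y x ≤ ‖L‖ + ε := by
    intro ε hε
    have h := (hf.isLittleO.def hε).filter_mono (nhdsWithin_le_nhds (s := {x}ᶜ))
    filter_upwards [h, self_mem_nhdsWithin] with y hy hyx
    have hd : 0 < dist y x := dist_pos.2 hyx
    rw [div_le_iff₀ hd, dist_eq_norm]
    have h1 : |f y - f x| ≤ ‖f y - f x - L (y - x)‖ + ‖L (y - x)‖ := by
      have := norm_add_le (f y - f x - L (y - x)) (L (y - x))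
      simpa using this
    have h2 := L.le_opNorm (y - x)
    linarith
  have hb : IsBoundedUnder (· ≤ ·) (𝓝[≠] x) (fun y => |f y - f x| / dist y x) :=
    ⟨‖L‖ + 1, by simpa using hup 1 one_pos⟩
  have hnn : ∀ y, 0 ≤ |f y - f x| / dist y x := fun y => by positivity
  have hcb : IsCoboundedUnder (· ≤ ·) (𝓝[≠] x) (fun y => |f y - f x| / dist y x) :=
    isCoboundedUnder_le_of_le (𝓝[≠] x) (x := 0) hnn
  apply le_antisymm
  · apply _root_.le_of_forall_pos_le_add
    intro ε hε
    exact limsup_le_of_le hcb (hup ε hε)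
  · have h0 : 0 ≤ localLip f x :=
      le_limsup_of_frequently_le (Frequently.of_forall hnn) hb
    refine L.opNorm_le_bound h0 fun v => ?_
    by_cases hv : v = 0
    · simp [hv]
    have hvn : 0 < ‖v‖ := norm_pos_iff.2 hv
    have h1 : Tendsto (fun t : ℝ => |t⁻¹ • (f (x + t • v) - f x)| / ‖v‖) (𝓝[>] 0)
        (𝓝 (|L v| / ‖v‖)) :=
      ((hf.hasLineDerivAt v).tendsto_slope_zero_right.abs).div_const _
    have h2 : Tendsto (fun t : ℝ => x + t • v) (𝓝[>] 0) (𝓝[≠] x) := by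
      refine tendsto_nhdsWithin_iff.2 ⟨?_, ?_⟩
      · have : Tendsto (fun t : ℝ => x + t • v) (𝓝 0) (𝓝 (x + (0 : ℝ) • v)) :=
          Continuous.tendsto (by fun_prop) 0
        simp only [zero_smul, add_zero] at this
        exact this.mono_left nhdsWithin_le_nhds
      · filter_upwards [self_mem_nhdsWithin] with t ht
        have ht : (0 : ℝ) < t := ht
        simp [hv, ht.ne']
    have h3 : |L v| / ‖v‖ ≤ localLip f x := by
      apply _root_.le_of_forall_pos_le_add
      intro ε hε
      rw [← sub_le_iff_le_add]
      refine le_limsup_of_frequently_le ?_ hb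
      refine h2.frequently (Eventually.frequently ?_)
      filter_upwards [h1.eventually_const_lt (sub_lt_self _ hε), self_mem_nhdsWithin] with t ht ht0
      have ht0 : (0 : ℝ) < t := ht0
      refine ht.le.trans (le_of_eq ?_)
      rw [dist_eq_norm, add_sub_cancel_left, norm_smul, smul_eq_mul, abs_mul, abs_inv,
        Real.norm_eq_abs]
      field_simp
    rwa [div_le_iff₀ hvn] at h3

lemma locLip_onBall {f : gE n → ℝ} (hf : LocallyLipschitz f) (R : ℝ) :
    ∃ K, LipschitzOnWith K f (Metric.closedBall 0 R) :=
  (hf.locallyLipschitzOn).exists_lipschitzOnWith_of_compact (isCompact_closedBall 0 R)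

lemma locLip_ae_diff {f : gE n → ℝ} (hf : LocallyLipschitz f) :
    ∀ᵐ x, DifferentiableAt ℝ f x := by
  have h : ∀ k : ℕ, ∀ᵐ x : gE n, x ∈ Metric.closedBall (0 : gE n) k →
      DifferentiableWithinAt ℝ f (Metric.closedBall 0 k) x := by
    intro k
    obtain ⟨K, hK⟩ := locLip_onBall hf k
    exact hK.ae_differentiableWithinAt_of_mem
  rw [← ae_all_iff] at h
  filter_upwards [h] with x hx
  obtain ⟨k, hk⟩ := exists_nat_gt ‖x‖
  refine (hx k (by simpa using hk.le)).differentiableAt ?_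
  exact Filter.mem_of_superset (Metric.isOpen_ball.mem_nhds (by simpa using hk))
    Metric.ball_subset_closedBall

lemma localLip_ae [NeZero n] {f : gE n → ℝ} (hf : LocallyLipschitz f) :
    ∀ᵐ x ∂(stdGaussian n), localLip f x = ‖fderiv ℝ f x‖ := by
  filter_upwards [(stdG_abs n).ae_le (locLip_ae_diff hf)] with x hx
  exact localLip_eq hx.hasFDerivAt

lemma locLip_ibp {f g : gE n → ℝ} (hf : LocallyLipschitz f) (hg : ContDiff ℝ 1 g)
    (hgc : HasCompactSupport g) (v : gE n) :
    ∫ x, fderiv ℝ f x v * g x = - ∫ x, f x * fderiv ℝ g x v := by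
  obtain ⟨R, hR⟩ := hgc.isCompact.isBounded.subset_closedBall (0 : gE n)
  obtain ⟨K, hK⟩ := locLip_onBall hf (R + 1)
  obtain ⟨F, hF, hFe⟩ := hK.extend_real
  obtain ⟨C, hC⟩ := hg.lipschitzWith_of_hasCompactSupport hgc (by norm_num)
  have h := LipschitzWith.integral_lineDeriv_mul_eq (μ := volume) hF hC hgc v
  have e1 : ∫ x, fderiv ℝ f x v * g x = ∫ x, lineDeriv ℝ F x v * g x := by
    refine integral_congr_ae ?_
    filter_upwards [locLip_ae_diff hf] with x hx
    by_cases hgx : x ∈ tsupport g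
    · have hxR : ‖x‖ ≤ R := by simpa using hR hgx
      have : f =ᶠ[𝓝 x] F := by
        have hm : Metric.ball (0 : gE n) (R + 1) ∈ 𝓝 x :=
          Metric.isOpen_ball.mem_nhds (by simp; linarith)
        filter_upwards [hm] with y hy
        exact hFe (Metric.ball_subset_closedBall hy)
      rw [← this.lineDeriv_eq, hx.lineDeriv_eq_fderiv]
    · rw [image_eq_zero_of_notMem_tsupport hgx]; simp
  have e2 : ∫ x, lineDeriv ℝ g x (-v) * F x = - ∫ x, f x * fderiv ℝ g x v := by
    rw [← integral_neg]
    refine integral_congr_ae ?_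
    filter_upwards with x
    rw [(hg.differentiable (by norm_num) x).lineDeriv_eq_fderiv, map_neg]
    by_cases hgx : x ∈ tsupport g
    · have hxR : ‖x‖ ≤ R := by simpa using hR hgx
      rw [hFe (show x ∈ Metric.closedBall 0 (R + 1) by simp; linarith)]; ring
    · have : fderiv ℝ g x = 0 := by
        by_contra hne
        exact hgx (support_fderiv_subset ℝ hne)
      simp [this]
  rw [e1, h, e2]

end LocLip


section IBP
variable {n : ℕ}

lemma gw_hasFDerivAt (x : gE n) : HasFDerivAt (fun x : gE n => Real.exp (-‖x‖ ^ 2 / 2))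
    (-(Real.exp (-‖x‖ ^ 2 / 2)) • innerSL ℝ x) x := by
  have h := (hasStrictFDerivAt_norm_sq x).hasFDerivAt
  have h2 := (h.const_mul (-1 / 2 : ℝ)).exp
  have e : (fun x : gE n => Real.exp (-‖x‖ ^ 2 / 2)) = fun x => Real.exp (-1 / 2 * ‖x‖ ^ 2) := by
    ext x; congr 1; ring
  rw [e]
  refine h2.congr_fderiv ?_
  ext v
  simp
  rw [show -1 / 2 * ‖x‖ ^ 2 = -‖x‖ ^ 2 / 2 by ring]
  ring

lemma gw_fderiv (x : gE n) (i : Fin n) : fderiv ℝ (fun x : gE n => Real.exp (-‖x‖ ^ 2 / 2)) x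
    (EuclideanSpace.single i 1) = - x i * Real.exp (-‖x‖ ^ 2 / 2) := by
  rw [(gw_hasFDerivAt x).fderiv]
  simp [EuclideanSpace.inner_single_right]
  ring

lemma gw_contDiff : ContDiff ℝ 1 (fun x : gE n => Real.exp (-‖x‖ ^ 2 / 2)) := by
  have : ContDiff ℝ 1 (fun x : gE n => ‖x‖ ^ 2) := contDiff_norm_sq ℝ
  exact ((this.neg).div_const 2).exp

/-- IBP with cutoff -/
lemma ibp_cut {f χ : gE n → ℝ} (hf : LocallyLipschitz f) (hχ : ContDiff ℝ 1 χ)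
    (hχc : HasCompactSupport χ) (p : MvPolynomial (Fin n) ℝ) (i : Fin n) :
    ∫ x, fderiv ℝ f x (EuclideanSpace.single i 1) * (χ x * pf p x) ∂(stdGaussian n) =
    ∫ x, f x * (χ x * (x i * pf p x - pf (MvPolynomial.pderiv i p) x)
      - fderiv ℝ χ x (EuclideanSpace.single i 1) * pf p x) ∂(stdGaussian n) := by
  set g : gE n → ℝ := fun x => χ x * (pf p x * Real.exp (-‖x‖ ^ 2 / 2)) with hg
  have hp1 : ContDiff ℝ 1 (pf p) := (pf_contDiff p).of_le le_top
  have hgd : ContDiff ℝ 1 g := hχ.mul (hp1.mul gw_contDiff)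
  have h := locLip_ibp hf hgd hχc.mul_right (EuclideanSpace.single i 1)
  rw [stdG_integral, stdG_integral]
  congr 1
  have e1 : ∫ x, fderiv ℝ f x (EuclideanSpace.single i 1) * (χ x * pf p x) *
      Real.exp (-‖x‖ ^ 2 / 2) = ∫ x, fderiv ℝ f x (EuclideanSpace.single i 1) * g x := by
    congr 1; ext x; simp only [hg]; ring
  rw [e1, h, ← integral_neg]
  congr 1; ext x
  have hd : fderiv ℝ g x (EuclideanSpace.single i 1) =
      χ x * (pf p x * (- x i * Real.exp (-‖x‖ ^ 2 / 2)) +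
        Real.exp (-‖x‖ ^ 2 / 2) * pf (MvPolynomial.pderiv i p) x) +
      (pf p x * Real.exp (-‖x‖ ^ 2 / 2)) * fderiv ℝ χ x (EuclideanSpace.single i 1) := by
    have d1 := (hχ.differentiable (by norm_num) x)
    have d2 := (hp1.differentiable (by norm_num) x)
    have d3 := ((gw_contDiff (n := n)).differentiable (by norm_num) x)
    rw [hg, fderiv_fun_mul d1 (d2.fun_mul d3), fderiv_fun_mul d2 d3, ← gw_fderiv, ← pf_fderiv]
    simp
    ring
  rw [hd]; ring

lemma ibp_gauss {f : gE n → ℝ} (hf : LocallyLipschitz f) (hf2 : MemLp f 2 (stdGaussian n))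
    (i : Fin n)
    (hf' : MemLp (fun x => fderiv ℝ f x (EuclideanSpace.single i 1)) 2 (stdGaussian n))
    (p : MvPolynomial (Fin n) ℝ) :
    ∫ x, fderiv ℝ f x (EuclideanSpace.single i 1) * pf p x ∂(stdGaussian n) =
    ∫ x, f x * pf (MvPolynomial.X i * p - MvPolynomial.pderiv i p) x ∂(stdGaussian n) := by
  let χ : ContDiffBump (0 : gE n) := ⟨1, 2, one_pos, one_lt_two⟩
  have hχd : ContDiff ℝ 1 (χ : gE n → ℝ) := χ.contDiff
  have hχc : HasCompactSupport (χ : gE n → ℝ) := χ.hasCompactSupport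
  let c : ℕ → ℝ := fun k => ((k : ℝ) + 1)⁻¹
  have hc0 : ∀ k, c k ≠ 0 := fun k => by simp only [c]; positivity
  have hc1 : ∀ k, |c k| ≤ 1 := fun k => by
    simp only [c]; rw [abs_of_nonneg (by positivity)]
    apply inv_le_one_of_one_le₀; linarith [Nat.cast_nonneg (α := ℝ) k]
  have hclim : Tendsto c atTop (𝓝 0) := by
    simpa [c, one_div] using tendsto_one_div_add_atTop_nhds_zero_nat (𝕜 := ℝ)
  let X : ℕ → gE n → ℝ := fun k x => χ (c k • x)
  have hXd : ∀ k, ContDiff ℝ 1 (X k) := fun k => hχd.comp (contDiff_const_smul _)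
  have hXc : ∀ k, HasCompactSupport (X k) := fun k =>
    hχc.comp_homeomorph (Homeomorph.smulOfNeZero (c k) (hc0 k))
  obtain ⟨M, hM⟩ : ∃ M, ∀ x, ‖fderiv ℝ χ x‖ ≤ M :=
    (hχc.fderiv ℝ).exists_bound_of_continuous (hχd.continuous_fderiv (by norm_num))
  have hM0 : 0 ≤ M := (norm_nonneg _).trans (hM 0)
  have hXf : ∀ k x, |fderiv ℝ (X k) x (EuclideanSpace.single i 1)| ≤ |c k| * M := by
    intro k x
    have : fderiv ℝ (X k) x = c k • fderiv ℝ χ (c k • x) := by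
      simp only [X]
      exact fderiv_comp_smul (c k)
    rw [this]
    simp only [_root_.smul_apply, smul_eq_mul, abs_mul]
    gcongr
    have := (fderiv ℝ χ (c k • x)).le_opNorm (EuclideanSpace.single i 1)
    simp at this
    exact this.trans (hM _)
  have hX1 : ∀ k x, |X k x| ≤ 1 := fun k x => by
    simp only [X]; rw [abs_of_nonneg χ.nonneg]; exact χ.le_one
  have hXlim : ∀ x, Tendsto (fun k => X k x) atTop (𝓝 1) := by
    intro x
    have h1 : Tendsto (fun k => c k • x) atTop (𝓝 ((0 : ℝ) • x)) := hclim.smul_const x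
    have h2 := (hχd.continuous.tendsto ((0 : ℝ) • x)).comp h1
    have h3 : χ ((0 : ℝ) • x) = 1 := by
      rw [zero_smul]; exact χ.one_of_mem_closedBall (by simp [χ])
    rwa [h3] at h2
  have hX'lim : ∀ x, Tendsto (fun k => fderiv ℝ (X k) x (EuclideanSpace.single i 1)) atTop
      (𝓝 0) := by
    intro x
    refine squeeze_zero_norm (fun k => hXf k x) ?_
    simpa using hclim.abs.mul_const M
  set q := MvPolynomial.X i * p - MvPolynomial.pderiv i p with hq
  have hqe : ∀ x, x i * pf p x - pf (MvPolynomial.pderiv i p) x = pf q x := by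
    intro x; rw [hq, pf_sub, pf_mul, pf_X]
  have L1 : Tendsto (fun k => ∫ x, fderiv ℝ f x (EuclideanSpace.single i 1) * (X k x * pf p x)
      ∂(stdGaussian n)) atTop
      (𝓝 (∫ x, fderiv ℝ f x (EuclideanSpace.single i 1) * pf p x ∂(stdGaussian n))) := by
    refine tendsto_integral_of_dominated_convergence
      (fun x => ‖fderiv ℝ f x (EuclideanSpace.single i 1) * pf p x‖) ?_ ?_ ?_ ?_
    · intro k
      exact hf'.1.mul (((hXd k).continuous.mul (pf_cont p)).aestronglyMeasurable)
    · exact (hf'.integrable_mul (pf_memLp p)).norm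
    · intro k
      filter_upwards with x
      rw [norm_mul, norm_mul, norm_mul]
      gcongr
      exact mul_le_of_le_one_left (norm_nonneg _) (hX1 k x)
    · filter_upwards with x
      simpa using ((hXlim x).mul_const (pf p x)).const_mul
        (fderiv ℝ f x (EuclideanSpace.single i 1))
  have L2 : Tendsto (fun k => ∫ x, f x * (X k x * (x i * pf p x - pf (MvPolynomial.pderiv i p) x)
      - fderiv ℝ (X k) x (EuclideanSpace.single i 1) * pf p x)
      ∂(stdGaussian n)) atTop
      (𝓝 (∫ x, f x * pf q x ∂(stdGaussian n))) := by
    simp only [hqe]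
    refine tendsto_integral_of_dominated_convergence
      (fun x => ‖f x * pf q x‖ + M * ‖f x * pf p x‖) ?_ ?_ ?_ ?_
    · intro k
      refine hf2.1.mul (Continuous.aestronglyMeasurable ?_)
      have h1 := (hXd k).continuous
      have h2 := (hXd k).continuous_fderiv (by norm_num)
      have h3 := pf_cont p
      have h4 := pf_cont q
      fun_prop
    · exact (hf2.integrable_mul (pf_memLp q)).norm.add
        ((hf2.integrable_mul (pf_memLp p)).norm.const_mul M)
    · intro k
      filter_upwards with x
      rw [mul_sub]
      refine (norm_sub_le _ _).trans (add_le_add ?_ ?_)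
      · rw [norm_mul, norm_mul, norm_mul]
        gcongr
        exact mul_le_of_le_one_left (norm_nonneg _) (hX1 k x)
      · rw [norm_mul, norm_mul, norm_mul, mul_left_comm]
        gcongr
        exact (hXf k x).trans (mul_le_of_le_one_left hM0 (hc1 k))
    · filter_upwards with x
      simpa using (((hXlim x).mul_const (pf q x)).sub
        ((hX'lim x).mul_const (pf p x))).const_mul (f x)
  refine tendsto_nhds_unique L1 (L2.congr fun k => ?_)
  exact (ibp_cut hf (hXd k) (hXc k) p i).symm

end IBP


section Density
variable {n : ℕ}

lemma inner_eq_pf (t : gE n) : ∃ q : MvPolynomial (Fin n) ℝ, ∀ x, inner ℝ x t = pf q x := by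
  refine ⟨∑ i, t i • MvPolynomial.X i, fun x => ?_⟩
  simp [pf_sum, pf_smul, pf_X, PiLp.inner_apply]

lemma gfourier_zero {u : gE n → ℝ} (hu : MemLp u 2 (stdGaussian n))
    (h : ∀ p, ∫ x, pf p x * u x ∂(stdGaussian n) = 0) (t : gE n) :
    ∫ x, Complex.exp ((inner ℝ x t : ℝ) * Complex.I) * (u x : ℂ) ∂(stdGaussian n) = 0 := by
  obtain ⟨q, hq⟩ := inner_eq_pf t
  have hs := hasSum_integral_of_dominated_convergence (μ := stdGaussian n)
    (F := fun (k : ℕ) x => (((inner ℝ x t : ℝ) * Complex.I) ^ k / (k.factorial : ℂ)) * (u x : ℂ))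
    (f := fun x => Complex.exp ((inner ℝ x t : ℝ) * Complex.I) * (u x : ℂ))
    (bound := fun k x => (|inner ℝ x t| ^ k / (k.factorial : ℝ)) * |u x|) ?_ ?_ ?_ ?_ ?_
  · refine hs.unique ?_
    convert hasSum_zero with k
    have : (fun x : gE n => (((inner ℝ x t : ℝ) * Complex.I) ^ k / (k.factorial : ℂ)) * (u x : ℂ)) =
        fun x => (Complex.I ^ k / (k.factorial : ℂ)) * ((pf (q ^ k) x * u x : ℝ) : ℂ) := by
      ext x
      have e : pf (q ^ k) x = (inner ℝ x t) ^ k := by rw [hq]; simp [pf]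
      rw [e]; push_cast; ring
    rw [this, integral_const_mul, integral_complex_ofReal, h]; simp
  · intro k
    refine AEStronglyMeasurable.mul ?_ ?_
    · exact Continuous.aestronglyMeasurable (by fun_prop)
    · exact Complex.continuous_ofReal.comp_aestronglyMeasurable hu.1
  · intro k
    filter_upwards with x
    simp
  · filter_upwards with x
    exact (Real.summable_pow_div_factorial _).mul_right _
  · have : (fun a : gE n => ∑' k : ℕ, (|inner ℝ a t| ^ k / (k.factorial : ℝ)) * |u a|) =
        fun a => Real.exp |inner ℝ a t| * |u a| := by
      ext a
      rw [tsum_mul_right, Real.exp_eq_exp_ℝ, NormedSpace.exp_eq_tsum_div]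
    rw [this]
    refine ((stdG_exp_memLp n ‖t‖).integrable_mul hu.abs).mono' ?_ ?_
    · exact (Continuous.aestronglyMeasurable (by fun_prop)).mul hu.abs.1
    · filter_upwards with x
      rw [norm_mul, Real.norm_eq_abs, Real.abs_exp, Real.norm_eq_abs, abs_abs]
      simp only [Pi.mul_apply, Pi.abs_apply]
      gcongr
      rw [mul_comm]
      exact abs_real_inner_le_norm x t
  · filter_upwards with x
    have := (NormedSpace.expSeries_div_hasSum_exp ((inner ℝ x t : ℝ) * Complex.I))
    rw [← Complex.exp_eq_exp_ℂ] at this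
    exact this.mul_right _

lemma poly_complete {u : gE n → ℝ} (hu : MemLp u 2 (stdGaussian n))
    (h : ∀ p, ∫ x, pf p x * u x ∂(stdGaussian n) = 0) : u =ᵐ[stdGaussian n] 0 := by
  have hi : Integrable u (stdGaussian n) := hu.integrable (by norm_num)
  have hm : AEMeasurable u (stdGaussian n) := hi.aemeasurable
  have hF := gfourier_zero hu h
  have hfin1 := isFiniteMeasure_withDensity_ofReal hi.2
  have hfin2 := isFiniteMeasure_withDensity_ofReal hi.neg.2
  have hc : ∀ v : gE n → ℝ, Integrable v (stdGaussian n) → ∀ t,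
      charFun ((stdGaussian n).withDensity fun x => ENNReal.ofReal (v x)) t =
      ∫ x, Complex.exp ((inner ℝ x t : ℝ) * Complex.I) * ((max (v x) 0 : ℝ) : ℂ)
        ∂(stdGaussian n) := by
    intro v hv t
    rw [charFun_apply, integral_withDensity_eq_integral_toReal_smul₀
      hv.aemeasurable.ennreal_ofReal (by simp)]
    congr 1; ext x
    rw [ENNReal.toReal_ofReal']
    simp [mul_comm]
  have hint : ∀ v : gE n → ℝ, Integrable v (stdGaussian n) → ∀ t,
      Integrable (fun x : gE n => Complex.exp ((inner ℝ x t : ℝ) * Complex.I) *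
        ((max (v x) 0 : ℝ) : ℂ)) (stdGaussian n) := by
    intro v hv t
    refine hv.pos_part.ofReal.bdd_mul (c := 1) (Continuous.aestronglyMeasurable (by fun_prop)) ?_
    filter_upwards with x
    rw [Complex.norm_exp_ofReal_mul_I]
  have heq : (stdGaussian n).withDensity (fun x => ENNReal.ofReal (u x)) =
      (stdGaussian n).withDensity (fun x => ENNReal.ofReal ((-u) x)) := by
    apply Measure.ext_of_charFun
    ext t
    rw [hc u hi, hc (-u) hi.neg, ← sub_eq_zero, ← integral_sub (hint _ hi t) (hint _ hi.neg t),
      ← hF t]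
    congr 1; ext x
    rw [← mul_sub, ← Complex.ofReal_sub]
    congr 2
    simp only [Pi.neg_apply]
    rcases le_total (u x) 0 with h0 | h0
    · rw [max_eq_right h0, max_eq_left (by linarith)]; ring
    · rw [max_eq_left h0, max_eq_right (by linarith)]; ring
  have hae := (withDensity_eq_iff hm.ennreal_ofReal hm.neg.ennreal_ofReal
    (hi.lintegral_lt_top).ne).1 heq
  filter_upwards [hae] with x hx
  simp only [Pi.neg_apply, Pi.zero_apply] at hx ⊢
  rcases le_total (u x) 0 with h0 | h0
  · rw [ENNReal.ofReal_of_nonpos h0, eq_comm, ENNReal.ofReal_eq_zero] at hx; linarith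
  · rw [ENNReal.ofReal_of_nonpos (by linarith : - u x ≤ 0), ENNReal.ofReal_eq_zero] at hx; linarith

end Density

section JMap
variable {n : ℕ}

/-- polynomials into L2 -/
noncomputable def gJ (n : ℕ) : MvPolynomial (Fin n) ℝ →ₗ[ℝ] Lp ℝ 2 (stdGaussian n) where
  toFun p := (pf_memLp p).toLp _
  map_add' p q := by
    rw [← MemLp.toLp_add]
    exact MemLp.toLp_congr _ _ (ae_of_all _ fun x => pf_add p q x)
  map_smul' c p := by
    rw [RingHom.id_apply, ← MemLp.toLp_const_smul]
    exact MemLp.toLp_congr _ _ (ae_of_all _ fun x => pf_smul c p x)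

lemma inner_toLp {f g : gE n → ℝ} (hf : MemLp f 2 (stdGaussian n)) (hg : MemLp g 2 (stdGaussian n)) :
    inner ℝ (hf.toLp f) (hg.toLp g) = ∫ x, f x * g x ∂(stdGaussian n) := by
  rw [L2.inner_def]
  refine integral_congr_ae ?_
  filter_upwards [hf.coeFn_toLp, hg.coeFn_toLp] with x h1 h2
  rw [h1, h2]; simp [mul_comm]

lemma gJ_dense : DenseRange (gJ n) := by
  have : (LinearMap.range (gJ n)).topologicalClosure = ⊤ := by
    rw [Submodule.topologicalClosure_eq_top_iff, Submodule.eq_bot_iff]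
    intro u hu
    have hm := Lp.memLp u
    have : u =ᵐ[stdGaussian n] (0 : gE n → ℝ) := by
      refine poly_complete hm fun p => ?_
      have h1 := (Submodule.mem_orthogonal _ _).1 hu (gJ n p) ⟨p, rfl⟩
      have h2 := inner_toLp (pf_memLp p) hm
      rw [Lp.toLp_coeFn] at h2
      rw [← h2]; exact h1
    rw [Lp.eq_zero_iff_ae_eq_zero]; exact this
  have h2 := (Submodule.dense_iff_topologicalClosure_eq_top).2 this
  exact h2

end JMap


section Assembly
variable {n : ℕ}

/-- partial derivative -/
noncomputable def gd (i : Fin n) (f : gE n → ℝ) (x : gE n) : ℝ :=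
  fderiv ℝ f x (EuclideanSpace.single i 1)

/-- good functions -/
structure gGood (f : gE n → ℝ) : Prop where
  lip : LocallyLipschitz f
  l2 : MemLp f 2 (stdGaussian n)
  dl2 : ∀ i, MemLp (gd i f) 2 (stdGaussian n)

lemma gd_meas (i : Fin n) (f : gE n → ℝ) : Measurable (gd i f) :=
  measurable_fderiv_apply_const ℝ f _

lemma gd_pf (i : Fin n) (p : MvPolynomial (Fin n) ℝ) : gd i (pf p) = pf (MvPolynomial.pderiv i p) := by
  ext x; exact pf_fderiv p x i

lemma pf_good (p : MvPolynomial (Fin n) ℝ) : gGood (pf p) where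
  lip := ((pf_contDiff p).of_le le_top : ContDiff ℝ 1 (pf p)).locallyLipschitz
  l2 := pf_memLp p
  dl2 i := by rw [gd_pf]; exact pf_memLp _

lemma good_of_W12 [NeZero n] {f : gE n → ℝ} (h : memW12Lip (stdGaussian n) f) : gGood f := by
  obtain ⟨hl, hlt⟩ := h
  obtain ⟨h1, h2⟩ := ENNReal.add_lt_top.1 hlt
  refine ⟨hl, ?_, fun i => ?_⟩
  · rw [memLp_two_iff_integrable_sq hl.continuous.aestronglyMeasurable]
    refine ⟨(hl.continuous.pow 2).aestronglyMeasurable, ?_⟩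
    rw [hasFiniteIntegral_iff_ofReal (ae_of_all _ fun x => sq_nonneg _)]
    exact h1
  · rw [memLp_two_iff_integrable_sq (gd_meas i f).aestronglyMeasurable]
    refine ⟨((gd_meas i f).pow_const 2).aestronglyMeasurable, ?_⟩
    rw [hasFiniteIntegral_iff_ofReal (ae_of_all _ fun x => sq_nonneg _)]
    refine lt_of_le_of_lt (lintegral_mono_ae ?_) h2
    filter_upwards [localLip_ae hl] with x hx
    rw [hx, norm_dual_sq]
    apply ENNReal.ofReal_le_ofReal
    exact Finset.single_le_sum (f := fun i => (fderiv ℝ f x (EuclideanSpace.single i 1)) ^ 2)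
      (fun i _ => sq_nonneg _) (Finset.mem_univ i)

/-- energy -/
noncomputable def gEn (f : gE n → ℝ) : ℝ := ∫ x, ∑ i, gd i f x ^ 2 ∂(stdGaussian n)

lemma localLip_energy [NeZero n] {f : gE n → ℝ} (hf : LocallyLipschitz f) :
    ∫ x, (localLip f x) ^ 2 ∂(stdGaussian n) = gEn f := by
  refine integral_congr_ae ?_
  filter_upwards [localLip_ae hf] with x hx
  simp only [hx, norm_dual_sq, gd]

lemma W12_of_good [NeZero n] {f : gE n → ℝ} (h : gGood f) : memW12Lip (stdGaussian n) f := by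
  refine ⟨h.lip, ENNReal.add_lt_top.2 ⟨?_, ?_⟩⟩
  · exact h.l2.integrable_sq.lintegral_lt_top
  · have : ∫⁻ x, ENNReal.ofReal ((localLip f x) ^ 2) ∂(stdGaussian n) =
        ∫⁻ x, ENNReal.ofReal (∑ i, gd i f x ^ 2) ∂(stdGaussian n) := by
      refine lintegral_congr_ae ?_
      filter_upwards [localLip_ae h.lip] with x hx
      simp only [hx, norm_dual_sq, gd]
    rw [this]
    exact (integrable_finset_sum _ fun i _ => (h.dl2 i).integrable_sq).lintegral_lt_top

lemma inner_gD {f : gE n → ℝ} (h : gGood f) (p : MvPolynomial (Fin n) ℝ) :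
    inner ℝ (gJ n (gD n p)) (h.l2.toLp f) =
      ∫ x, ∑ i, gd i f x * gd i (pf p) x ∂(stdGaussian n) := by
  change inner ℝ ((pf_memLp (gD n p)).toLp _) (h.l2.toLp f) = _
  rw [inner_toLp, integral_finset_sum]
  · have : ∀ i, ∫ x, gd i f x * gd i (pf p) x ∂(stdGaussian n) =
        ∫ x, f x * pf (MvPolynomial.X i * MvPolynomial.pderiv i p
          - MvPolynomial.pderiv i (MvPolynomial.pderiv i p)) x ∂(stdGaussian n) := by
      intro i
      rw [gd_pf]
      exact ibp_gauss h.lip h.l2 i (h.dl2 i) _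
    simp only [this]
    rw [← integral_finset_sum]
    · congr 1; ext x
      rw [gD_apply, pf_sum, mul_comm, Finset.mul_sum]
    · intro i _
      exact h.l2.integrable_mul (pf_memLp _)
  · intro i _
    exact (h.dl2 i).integrable_mul ((pf_good p).dl2 i)

lemma gD_sym (p q : MvPolynomial (Fin n) ℝ) :
    inner ℝ (gJ n (gD n p)) (gJ n q) = inner ℝ (gJ n p) (gJ n (gD n q)) := by
  rw [real_inner_comm (gJ n (gD n q))]
  have h1 := inner_gD (pf_good q) p
  have h2 := inner_gD (pf_good p) q
  change inner ℝ (gJ n (gD n p)) (gJ n q) = _ at h1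
  change inner ℝ (gJ n (gD n q)) (gJ n p) = _ at h2
  rw [h1, h2]
  simp only [mul_comm]

lemma gD_energy (p : MvPolynomial (Fin n) ℝ) :
    inner ℝ (gJ n (gD n p)) (gJ n p) = gEn (pf p) := by
  have h1 := inner_gD (pf_good p) p
  change inner ℝ (gJ n (gD n p)) (gJ n p) = _ at h1
  rw [h1, gEn]
  simp only [sq]

lemma gEn_nonneg (f : gE n → ℝ) : 0 ≤ gEn f :=
  integral_nonneg fun x => Finset.sum_nonneg fun i _ => sq_nonneg _

lemma gEn_cs {f g : gE n → ℝ} (hf : gGood f) (hg : gGood g) :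
    (∫ x, ∑ i, gd i f x * gd i g x ∂(stdGaussian n)) ^ 2 ≤ gEn g * gEn f := by
  set I := ∫ x, ∑ i, gd i f x * gd i g x ∂(stdGaussian n) with hI
  have i1 : Integrable (fun x => ∑ i, gd i f x * gd i g x) (stdGaussian n) :=
    integrable_finset_sum _ fun i _ => (hf.dl2 i).integrable_mul (hg.dl2 i)
  have i2 : Integrable (fun x => ∑ i, gd i f x ^ 2) (stdGaussian n) :=
    integrable_finset_sum _ fun i _ => (hf.dl2 i).integrable_sq
  have i3 : Integrable (fun x => ∑ i, gd i g x ^ 2) (stdGaussian n) :=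
    integrable_finset_sum _ fun i _ => (hg.dl2 i).integrable_sq
  have key : ∀ s : ℝ, 0 ≤ gEn g * (s * s) + (2 * I) * s + gEn f := by
    intro s
    have e : gEn g * (s * s) + (2 * I) * s + gEn f =
        ∫ x, ∑ i, (gd i f x + s * gd i g x) ^ 2 ∂(stdGaussian n) := by
      have : (fun x : gE n => ∑ i, (gd i f x + s * gd i g x) ^ 2) =
          fun x => ((s * s) * ∑ i, gd i g x ^ 2 + (2 * s) * ∑ i, gd i f x * gd i g x)
            + ∑ i, gd i f x ^ 2 := by
        ext x
        rw [Finset.mul_sum, Finset.mul_sum, ← Finset.sum_add_distrib, ← Finset.sum_add_distrib]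
        exact Finset.sum_congr rfl fun i _ => by ring
      have i4 : Integrable (fun x => (s * s) * ∑ i, gd i g x ^ 2
          + (2 * s) * ∑ i, gd i f x * gd i g x) (stdGaussian n) :=
        (i3.const_mul _).add (i1.const_mul _)
      rw [this, integral_add i4 i2,
        integral_add (i3.const_mul _) (i1.const_mul _), integral_const_mul, integral_const_mul,
        gEn, gEn, hI]
      ring
    rw [e]
    exact integral_nonneg fun x => Finset.sum_nonneg fun i _ => sq_nonneg _
  have := discrim_le_zero key
  rw [discrim] at this
  nlinarith

lemma norm_toLp_sq {f : gE n → ℝ} (hf : MemLp f 2 (stdGaussian n)) :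
    ‖hf.toLp f‖ ^ 2 = ∫ x, f x ^ 2 ∂(stdGaussian n) := by
  rw [← real_inner_self_eq_norm_sq, inner_toLp]; simp only [sq]

lemma gLower (l : ℕ) {f : gE n → ℝ} (hf : gGood f)
    (ho : ∀ s ∈ gQ n l, ∫ x, pf s x * f x ∂(stdGaussian n) = 0) :
    l * ∫ x, f x ^ 2 ∂(stdGaussian n) ≤ gEn f := by
  rw [← norm_toLp_sq hf.l2]
  refine absH_main (gJ n) (gD n) (gQ n) (gQ_zero n) (gQ_mono n) (gQ_top n) (gD_sub n) gD_sym
    gJ_dense l _ _ (gEn_nonneg f) ?_ ?_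
  · intro s hs
    rw [← ho s hs]
    exact inner_toLp (pf_memLp s) hf.l2
  · intro p
    rw [inner_gD hf, gD_energy]
    exact gEn_cs hf (pf_good p)

lemma gUpper (l : ℕ) (p : MvPolynomial (Fin n) ℝ) (hp : p ∈ gQ n (l + 1)) :
    gEn (pf p) ≤ l * ∫ x, pf p x ^ 2 ∂(stdGaussian n) := by
  rw [← norm_toLp_sq (pf_memLp p), ← gD_energy]
  exact absH_upper (gJ n) (gD n) (gQ n) (gQ_zero n) (gQ_mono n) (gD_sub n) gD_sym l p hp

/-- polys as functions -/
noncomputable def pfL (n : ℕ) : MvPolynomial (Fin n) ℝ →ₗ[ℝ] (gE n → ℝ) where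
  toFun := pf
  map_add' p q := by ext x; exact pf_add p q x
  map_smul' c p := by ext x; exact pf_smul c p x

lemma pfL_inj : Function.Injective (pfL n) := by
  intro p q h
  apply MvPolynomial.funext
  intro y
  exact congrFun h (WithLp.toLp 2 y)

lemma exists_polyF (hn : 1 ≤ n) (l k : ℕ) (hk : k ≤ (n + l).choose l) :
    ∃ F : Submodule ℝ (gE n → ℝ), Module.finrank ℝ F = k ∧
      ∀ f ∈ F, ∃ p ∈ gQ n (l + 1), f = pf p := by
  rw [← gQ_finrank n hn l] at hk
  obtain ⟨v, hv⟩ := exists_linearIndependent_of_le_finrank hk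
  let P : gQ n (l + 1) →ₗ[ℝ] (gE n → ℝ) := (pfL n).comp (gQ n (l + 1)).subtype
  have hP : Function.Injective P := pfL_inj.comp Subtype.val_injective
  have hv' := hv.map' P (LinearMap.ker_eq_bot.2 hP)
  refine ⟨Submodule.span ℝ (Set.range (P ∘ v)), ?_, ?_⟩
  · rw [finrank_span_eq_card hv', Fintype.card_fin]
  · intro f hf
    have : Submodule.span ℝ (Set.range (P ∘ v)) ≤ LinearMap.range P := by
      rw [Submodule.span_le]
      rintro _ ⟨j, rfl⟩
      exact ⟨v j, rfl⟩
    obtain ⟨p, rfl⟩ := this hf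
    exact ⟨p, p.2, rfl⟩

lemma fd_bound {F H H' : Type*} [AddCommGroup F] [Module ℝ F] [FiniteDimensional ℝ F]
    [NormedAddCommGroup H] [NormedSpace ℝ H] [NormedAddCommGroup H'] [NormedSpace ℝ H']
    (A : F →ₗ[ℝ] H) (B : F →ₗ[ℝ] H') (hA : Function.Injective A) :
    ∃ C : ℝ, ∀ f, ‖B f‖ ≤ C * ‖A f‖ := by
  let e := LinearEquiv.ofInjective A hA
  let T : LinearMap.range A →L[ℝ] H' := LinearMap.toContinuousLinearMap (B.comp e.symm.toLinearMap)
  refine ⟨‖T‖, fun f => ?_⟩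
  have h1 : T (e f) = B f := by simp [T]
  have h2 : ‖e f‖ = ‖A f‖ := rfl
  rw [← h1, ← h2]
  exact T.le_opNorm _

lemma gBdd (F : Submodule ℝ (gE n → ℝ)) [FiniteDimensional ℝ F] (hF : ∀ f ∈ F, gGood f) :
    ∃ C : ℝ, ∀ f ∈ F, gEn f ≤ C * ∫ x, f x ^ 2 ∂(stdGaussian n) := by
  let A : F →ₗ[ℝ] Lp ℝ 2 (stdGaussian n) :=
    { toFun := fun f => (hF f f.2).l2.toLp _
      map_add' := fun f g => by rw [← MemLp.toLp_add]; rfl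
      map_smul' := fun c f => by rw [RingHom.id_apply, ← MemLp.toLp_const_smul]; rfl }
  have hA : Function.Injective A := by
    intro f g h
    have h1 := (MemLp.toLp_eq_toLp_iff (hF f f.2).l2 (hF g g.2).l2).1 h
    exact Subtype.ext (((hF f f.2).lip.continuous.ae_eq_iff_eq _ (hF g g.2).lip.continuous).1 h1)
  let B : Fin n → F →ₗ[ℝ] Lp ℝ 2 (stdGaussian n) := fun i =>
    { toFun := fun f => ((hF f f.2).dl2 i).toLp _
      map_add' := fun f g => by
        rw [← MemLp.toLp_add]
        refine MemLp.toLp_congr _ _ ?_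
        filter_upwards [(stdG_abs n).ae_le (locLip_ae_diff (hF f f.2).lip),
          (stdG_abs n).ae_le (locLip_ae_diff (hF g g.2).lip)] with x h1 h2
        simp only [gd, Submodule.coe_add, Pi.add_apply]
        rw [fderiv_add h1 h2]; simp
      map_smul' := fun c f => by
        rw [RingHom.id_apply, ← MemLp.toLp_const_smul]
        refine MemLp.toLp_congr _ _ ?_
        filter_upwards [(stdG_abs n).ae_le (locLip_ae_diff (hF f f.2).lip)] with x h1
        simp only [gd, Submodule.coe_smul, Pi.smul_apply]
        rw [fderiv_const_smul h1]; simp }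
  choose C hC using fun i => fd_bound A (B i) hA
  refine ⟨∑ i, C i ^ 2, fun f hf => ?_⟩
  have hg := hF f hf
  rw [gEn, integral_finset_sum _ fun i _ => (hg.dl2 i).integrable_sq, Finset.sum_mul]
  refine Finset.sum_le_sum fun i _ => ?_
  rw [← norm_toLp_sq hg.l2, ← norm_toLp_sq (hg.dl2 i), ← mul_pow]
  exact pow_le_pow_left₀ (norm_nonneg _) (hC i ⟨f, hf⟩) 2

lemma exists_orth (hn : 1 ≤ n) (l : ℕ) (F : Submodule ℝ (gE n → ℝ)) [FiniteDimensional ℝ F]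
    (hF : ∀ f ∈ F, gGood f) (hk : (n + l).choose l < Module.finrank ℝ F) :
    ∃ f ∈ F, f ≠ 0 ∧ ∀ s ∈ gQ n (l + 1), ∫ x, pf s x * f x ∂(stdGaussian n) = 0 := by
  have hint : ∀ (s : MvPolynomial (Fin n) ℝ) (f : F),
      Integrable (fun x => pf s x * f.1 x) (stdGaussian n) :=
    fun s f => (pf_memLp s).integrable_mul (hF f f.2).l2
  let T : F →ₗ[ℝ] Module.Dual ℝ (gQ n (l + 1)) :=
    LinearMap.mk₂ ℝ (fun f s => ∫ x, pf s.1 x * f.1 x ∂(stdGaussian n))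
      (fun f g s => by
        rw [← integral_add (hint s.1 f) (hint s.1 g)]
        congr 1; ext x; simp [mul_add])
      (fun c f s => by
        rw [smul_eq_mul, ← integral_const_mul]
        congr 1; ext x; simp; ring)
      (fun f s t => by
        rw [← integral_add (hint s.1 f) (hint t.1 f)]
        congr 1; ext x; simp [pf_add, add_mul])
      (fun c f s => by
        rw [smul_eq_mul, ← integral_const_mul]
        congr 1; ext x; simp [pf_smul]; ring)
  have hker : LinearMap.ker T ≠ ⊥ := by
    apply LinearMap.ker_ne_bot_of_finrank_lt
    rw [Subspace.dual_finrank_eq, gQ_finrank n hn l]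
    exact hk
  obtain ⟨f, hf, hf0⟩ := Submodule.exists_mem_ne_zero_of_ne_bot hker
  refine ⟨f, f.2, fun h => hf0 (Subtype.ext h), fun s hs => ?_⟩
  have := LinearMap.congr_fun (LinearMap.mem_ker.1 hf) ⟨s, hs⟩
  exact this

lemma int_sq_pos {f : gE n → ℝ} (hf : gGood f) (h0 : f ≠ 0) :
    0 < ∫ x, f x ^ 2 ∂(stdGaussian n) := by
  rw [← norm_toLp_sq hf.l2]
  have : hf.l2.toLp f ≠ 0 := by
    intro h
    have h1 : f =ᵐ[stdGaussian n] (0 : gE n → ℝ) :=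
      hf.l2.coeFn_toLp.symm.trans ((Lp.eq_zero_iff_ae_eq_zero).1 h)
    exact h0 ((hf.lip.continuous.ae_eq_iff_eq _ continuous_zero).1 h1)
  positivity

lemma lambda_le (hn : 1 ≤ n) (l k : ℕ) (hk : k ≤ (n + l).choose l) :
    lambdaLip (stdGaussian n) k ≤ l := by
  have : NeZero n := ⟨by omega⟩
  obtain ⟨F, hFk, hFp⟩ := exists_polyF hn l k hk
  rw [lambdaLip]
  refine csInf_le_of_le (b := sSup { r : ℝ | ∃ f ∈ F, (∫ x, (f x) ^ 2 ∂(stdGaussian n)) ≠ 0 ∧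
      r = (∫ x, (localLip f x) ^ 2 ∂(stdGaussian n)) / (∫ x, (f x) ^ 2 ∂(stdGaussian n)) })
    ?_ ⟨F, hFk, ?_, rfl⟩ ?_
  · refine ⟨0, ?_⟩
    rintro _ ⟨G, -, -, rfl⟩
    refine Real.sSup_nonneg ?_
    rintro _ ⟨f, -, -, rfl⟩
    exact div_nonneg (integral_nonneg fun _ => sq_nonneg _) (integral_nonneg fun _ => sq_nonneg _)
  · intro f hf
    obtain ⟨p, -, rfl⟩ := hFp f hf
    exact W12_of_good (pf_good p)
  · refine Real.sSup_le ?_ (Nat.cast_nonneg l)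
    rintro _ ⟨f, hf, h0, rfl⟩
    obtain ⟨p, hp, rfl⟩ := hFp f hf
    have hpos : 0 < ∫ x, pf p x ^ 2 ∂(stdGaussian n) :=
      lt_of_le_of_ne (integral_nonneg fun _ => sq_nonneg _) h0.symm
    rw [localLip_energy (pf_good p).lip, div_le_iff₀ hpos]
    exact gUpper l p hp

lemma lambda_ge (hn : 1 ≤ n) (l k : ℕ) (hk : (n + l).choose l < k) :
    (l : ℝ) + 1 ≤ lambdaLip (stdGaussian n) k := by
  have : NeZero n := ⟨by omega⟩
  rw [lambdaLip]
  apply le_csInf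
  · have hkk : k ≤ (n + k).choose k := by
      have h1 : (1 + k).choose k ≤ (n + k).choose k := Nat.choose_le_choose k (by omega)
      rw [add_comm 1 k, Nat.choose_succ_self_right] at h1
      omega
    obtain ⟨F, hFk, hFp⟩ := exists_polyF hn k k hkk
    refine ⟨_, F, hFk, ?_, rfl⟩
    intro f hf
    obtain ⟨p, -, rfl⟩ := hFp f hf
    exact W12_of_good (pf_good p)
  · rintro _ ⟨F, hFk, hFW, rfl⟩
    have hF : ∀ f ∈ F, gGood f := fun f hf => good_of_W12 (hFW f hf)
    have : FiniteDimensional ℝ F := FiniteDimensional.of_finrank_pos (by rw [hFk]; omega)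
    obtain ⟨f, hf, hf0, ho⟩ := exists_orth hn l F hF (hk.trans_eq hFk.symm)
    have hpos := int_sq_pos (hF f hf) hf0
    obtain ⟨C, hC⟩ := gBdd F hF
    have hlow : (l : ℝ) + 1 ≤ (∫ x, (localLip f x) ^ 2 ∂(stdGaussian n)) /
        (∫ x, (f x) ^ 2 ∂(stdGaussian n)) := by
      rw [localLip_energy (hF f hf).lip, le_div_iff₀ hpos]
      have := gLower (l + 1) (hF f hf) ho
      push_cast at this
      exact this
    refine hlow.trans (le_csSup ⟨C, ?_⟩ ⟨f, hf, hpos.ne', rfl⟩)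
    rintro _ ⟨g, hg, h0, rfl⟩
    have hpos' : 0 < ∫ x, g x ^ 2 ∂(stdGaussian n) :=
      lt_of_le_of_ne (integral_nonneg fun _ => sq_nonneg _) h0.symm
    rw [localLip_energy (hF g hg).lip, div_le_iff₀ hpos']
    exact hC g hg

end Assembly

/-- **Eigenvalue counting function of Gaussian space.** For every natural number `l`,
the number of indices `k ≥ 1` with `λ_k^Lip(ℝⁿ,|·|,γⁿ) ≤ l` equals `C(n+l, l)`:
the eigenvalues of Gaussian space are the non-negative integers, where `l ∈ ℕ` occurs
with multiplicity `C(n-1+l, l)`. -/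
theorem gaussian_eigenvalue_counting
    (n : ℕ) (hn : 1 ≤ n) (l : ℕ) :
    Set.ncard {k : ℕ | 1 ≤ k ∧ lambdaLip (stdGaussian n) k ≤ (l : ℝ)} =
      Nat.choose (n + l) l := by
  have hset : {k : ℕ | 1 ≤ k ∧ lambdaLip (stdGaussian n) k ≤ (l : ℝ)} =
      Finset.Icc 1 (Nat.choose (n + l) l) := by
    ext k
    simp only [Set.mem_ofPred_eq, Finset.coe_Icc, Set.mem_Icc]
    refine and_congr_right fun _ => ⟨fun h => ?_, fun h => lambda_le hn l k h⟩
    by_contra hc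
    have := lambda_ge hn l k (not_le.1 hc)
    linarith
  rw [hset, Set.ncard_coe_finset, Nat.card_Icc, Nat.add_sub_cancel]
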